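/- arXiv:1710.08754 — 4 statements merged into one kernel-verified Lean document; each statement's English description precedes it below -/
import Mathlib

section
/- Let P be a finite partially ordered set with n elements such that for every a ∈ P the set {b ∈ P : a < b} of elements strictly above a is a chain (totally ordered); equivalently, the Hasse diagram of P is a forest in which every connected component has a greatest element. For a ∈ P set c(a) = |{b ∈ P : b ≤ a}|. Then the number of "good labellings" of P, i.e. bijections ℓ : P → {1, …, n} such that a ≤ b implies ℓ(a) ≤ ℓ(b), equals n! / ∏_{a ∈ P} c(a). -/
/-!
In a good labelling the element with the largest label is a maximal element `m` of `P`, and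
deleting it leaves a good labelling of `P \ {m}`; conversely every good labelling of `P \ {m}`
extends by giving `m` the largest label. Deleting a maximal element does not change `c` at the
other elements, so by induction the good labellings in which `m` comes last number
`(n - 1)! * c m / ∏ a, c a`. The chain condition puts each element of `P` below exactly one maximal
element, so `∑ c m` over the maximal `m` is `n`, and the total is `n! / ∏ a, c a`.
-/

section Forest

variable {P : Type*} [PartialOrder P]

theorem existsUnique_le_isMax [Finite P] {a : P} (ha : IsChain (· ≤ ·) (Set.Ioi a)) :
    ∃! m : P, a ≤ m ∧ IsMax m := by
  obtain ⟨m, ham, hm⟩ : ∃ m, a ≤ m ∧ IsMax m := by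
    simpa using Set.finite_univ.exists_le_maximal (Set.mem_univ a)
  have hIci : IsChain (· ≤ ·) (Set.Ici a) := by
    rw [← Set.Ioi_insert]
    exact ha.insert fun b hb _ ↦ Or.inl hb.le
  refine ⟨m, ⟨ham, hm⟩, fun k ⟨hak, hk⟩ ↦ ?_⟩
  rcases hIci.total hak ham with hkm | hmk
  · exact hk.eq_of_le hkm
  · exact (hm.eq_of_le hmk).symm

theorem sum_card_Iic_isMax [Finite P] [Fintype {m : P // IsMax m}]
    (hchain : ∀ a : P, IsChain (· ≤ ·) (Set.Ioi a)) :
    ∑ m : {m : P // IsMax m}, Nat.card (Set.Iic m.1) = Nat.card P := by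
  rw [← Nat.card_sigma]
  refine Nat.card_eq_of_bijective (fun x ↦ x.2.1) ⟨?_, fun a ↦ ?_⟩
  · rintro ⟨⟨m, hm⟩, a, ham⟩ ⟨⟨k, hk⟩, b, hbk⟩ (rfl : a = b)
    obtain rfl := (existsUnique_le_isMax (hchain a)).unique ⟨ham, hm⟩ ⟨hbk, hk⟩
    rfl
  · obtain ⟨m, ⟨ham, hm⟩, -⟩ := existsUnique_le_isMax (hchain a)
    exact ⟨⟨⟨m, hm⟩, a, ham⟩, rfl⟩

theorem prod_card_Iic_eq_mul_prod_ne [Fintype P] [DecidableEq P] {m : P} (hm : IsMax m) :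
    ∏ a : P, Nat.card (Set.Iic a) =
      Nat.card (Set.Iic m) * ∏ a : {a : P // a ≠ m}, Nat.card (Set.Iic a) := by
  rw [Fintype.prod_eq_mul_prod_subtype_ne _ m]
  congr! 2 with a
  have hne {b : P} (hb : b ≤ a.1) : b ≠ m := fun h ↦ a.2 (hm.eq_of_le (h ▸ hb)).symm
  exact (Nat.card_congr (Equiv.subtypeSubtypeEquivSubtype hne)).symm

end Forest

/-- The good labellings of `P`, with labels in an arbitrary ordered type `L` in place of
`{1, …, n}`: deleting the largest label then leaves a label set of the same kind, with no
renumbering. -/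
abbrev GoodLabelling (P L : Type*) [Preorder P] [Preorder L] : Type _ :=
  {ℓ : P ≃ L // Monotone ℓ}

section Deletion

variable {P L : Type*}

/-- Deletion of `m` together with its label `t`, as a bijection from the labellings that send
`m` to `t` onto the labellings of the remaining elements by the remaining labels. -/
def deleteEquiv [DecidableEq P] [DecidableEq L] (m : P) (t : L) :
    {ℓ : P ≃ L // ℓ m = t} ≃ ({a : P // a ≠ m} ≃ {i : L // i ≠ t}) :=
  (((Equiv.optionSubtypeNe m).symm.equivCongr (Equiv.refl L)).subtypeEquiv
    fun _ ↦ Iff.rfl).trans (Equiv.optionSubtype t)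

theorem coe_deleteEquiv_apply [DecidableEq P] [DecidableEq L] {m : P} {t : L}
    (ℓ : {ℓ : P ≃ L // ℓ m = t}) (a : {a : P // a ≠ m}) :
    (deleteEquiv m t ℓ a : L) = ℓ.1 a :=
  rfl

theorem isMax_symm_apply_of_isTop [Preorder P] [PartialOrder L] {t : L}
    (ht : IsTop t) (ℓ : GoodLabelling P L) : IsMax (ℓ.1.symm t) :=
  (ℓ.2.strictMono_of_injective ℓ.1.injective).isMax_of_apply <| by
    simpa only [Equiv.apply_symm_apply] using ht.isMax

variable [PartialOrder P]

theorem monotone_deleteEquiv_iff [Preorder L] [DecidableEq P] [DecidableEq L] {m : P} {t : L}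
    (hm : IsMax m) (ht : IsTop t) (ℓ : {ℓ : P ≃ L // ℓ m = t}) :
    Monotone (deleteEquiv m t ℓ) ↔ Monotone ℓ.1 := by
  have le_iff (a b : {a : P // a ≠ m}) :
      deleteEquiv m t ℓ a ≤ deleteEquiv m t ℓ b ↔ ℓ.1 a ≤ ℓ.1 b := by
    rw [← Subtype.coe_le_coe, coe_deleteEquiv_apply, coe_deleteEquiv_apply]
  refine ⟨fun h a b hab ↦ ?_, fun h a b hab ↦ (le_iff a b).2 (h hab)⟩
  by_cases hb : b = m
  · rw [hb, ℓ.2]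
    exact ht _
  · have ha : a ≠ m := fun ha ↦ hb (hm.eq_of_le (ha ▸ hab)).symm
    exact (le_iff ⟨a, ha⟩ ⟨b, hb⟩).1 (h hab)

theorem card_goodLabelling_apply_eq [Preorder L] {m : P} {t : L} (hm : IsMax m) (ht : IsTop t) :
    Nat.card {ℓ : GoodLabelling P L // ℓ.1 m = t} =
      Nat.card (GoodLabelling {a : P // a ≠ m} {i : L // i ≠ t}) := by
  classical
  let swap : {ℓ : GoodLabelling P L // ℓ.1 m = t} ≃
      {ℓ : {ℓ : P ≃ L // ℓ m = t} // Monotone ℓ.1} :=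
    ⟨fun ℓ ↦ ⟨⟨ℓ.1.1, ℓ.2⟩, ℓ.1.2⟩, fun ℓ ↦ ⟨⟨ℓ.1.1, ℓ.2⟩, ℓ.1.2⟩, fun _ ↦ rfl, fun _ ↦ rfl⟩
  exact Nat.card_congr <| swap.trans <|
    (deleteEquiv m t).subtypeEquiv fun ℓ ↦ (monotone_deleteEquiv_iff hm ht ℓ).symm

theorem card_goodLabelling_eq_sum [Finite P] [Fintype {m : P // IsMax m}] [PartialOrder L]
    {t : L} (ht : IsTop t) :
    Nat.card (GoodLabelling P L) =
      ∑ m : {m : P // IsMax m}, Nat.card (GoodLabelling {a : P // a ≠ m} {i : L // i ≠ t}) := by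
  let last (ℓ : GoodLabelling P L) : {m : P // IsMax m} :=
    ⟨ℓ.1.symm t, isMax_symm_apply_of_isTop ht ℓ⟩
  have last_eq_iff (ℓ : GoodLabelling P L) (m) : last ℓ = m ↔ ℓ.1 m = t := by
    rw [Subtype.ext_iff, Equiv.symm_apply_eq, eq_comm]
  rw [← Nat.card_congr (Equiv.sigmaFiberEquiv last), Nat.card_sigma]
  refine Finset.sum_congr rfl fun m _ ↦ ?_
  rw [← card_goodLabelling_apply_eq m.2 ht]
  exact Nat.card_congr (Equiv.subtypeEquivRight (last_eq_iff · m))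

end Deletion

theorem card_goodLabelling_mul_prod {P L : Type*} [Fintype P] [PartialOrder P] [Fintype L]
    [LinearOrder L] (hcard : Fintype.card P = Fintype.card L)
    (hchain : ∀ a : P, IsChain (· ≤ ·) (Set.Ioi a)) :
    Nat.card (GoodLabelling P L) * ∏ a : P, Nat.card (Set.Iic a) =
      (Fintype.card P).factorial := by
  classical
  induction hn : Fintype.card P generalizing P L with
  | zero =>
    have : IsEmpty P := Fintype.card_eq_zero_iff.mp hn
    have : IsEmpty L := Fintype.card_eq_zero_iff.mp (hcard ▸ hn)
    have : Nonempty (GoodLabelling P L) := ⟨Equiv.equivOfIsEmpty P L, Subsingleton.monotone _⟩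
    rw [Nat.card_unique, Fintype.prod_empty, Nat.factorial_zero, one_mul]
  | succ n ih =>
    have : Nonempty L := Fintype.card_pos_iff.mp (by lia)
    obtain ⟨t, ht⟩ : ∃ t : L, IsTop t := Finite.exists_max id
    have ih_delete (m : P) : Nat.card (GoodLabelling {a : P // a ≠ m} {i : L // i ≠ t}) *
        ∏ a : {a : P // a ≠ m}, Nat.card (Set.Iic a) = n.factorial := by
      refine ih ?_ (fun a ↦ (hchain a).preimage_embedding (OrderEmbedding.subtype _)) ?_
      · simp [hcard]
      · simp [hn]
    calc Nat.card (GoodLabelling P L) * ∏ a : P, Nat.card (Set.Iic a)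
        = ∑ m : {m : P // IsMax m}, Nat.card (GoodLabelling {a : P // a ≠ m} {i : L // i ≠ t}) *
            ∏ a : P, Nat.card (Set.Iic a) := by
          rw [card_goodLabelling_eq_sum ht, Finset.sum_mul]
      _ = ∑ m : {m : P // IsMax m}, n.factorial * Nat.card (Set.Iic m.1) := by
          refine Finset.sum_congr rfl fun m _ ↦ ?_
          rw [prod_card_Iic_eq_mul_prod_ne m.2, mul_left_comm, ih_delete, mul_comm]
      _ = (n + 1).factorial := by
          rw [← Finset.mul_sum, sum_card_Iic_isMax hchain, Nat.card_eq_fintype_card, hn,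
            Nat.factorial_succ, mul_comm]

/-- **Number of good labellings of a forest-like poset.**
Let `P` be a finite poset in which, for every `a`, the set of elements strictly above `a`
is a chain (equivalently, the Hasse diagram is a forest each of whose components has a
greatest element).  For `a ∈ P` let `c a` be the number of elements `≤ a`.  Then the number
of order-preserving bijections `ℓ : P ≃ Fin n` (with `n = |P|`) is `n! / ∏ a, c a`. -/
theorem number_of_good_labellings {P : Type*} [Fintype P] [PartialOrder P]
    (hchain : ∀ a : P, IsChain (· ≤ ·) {b : P | a < b}) :
    Nat.card {ℓ : P ≃ Fin (Fintype.card P) // ∀ a b : P, a ≤ b → ℓ a ≤ ℓ b}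
      = Nat.factorial (Fintype.card P) / ∏ a : P, Nat.card {b : P // b ≤ a} := by
  have hprod : 0 < ∏ a : P, Nat.card {b : P // b ≤ a} := Finset.prod_pos fun a _ ↦
    have : Nonempty {b : P // b ≤ a} := ⟨a, le_rfl⟩
    Nat.card_pos
  exact Nat.eq_div_of_mul_eq_left hprod.ne'
    (card_goodLabelling_mul_prod (Fintype.card_fin _).symm hchain)
end

section
/- Let x ∈ S′_{m,n} be nilpotent. Then there exists a unique (m+2n)-dimensional subspace L ⊆ V such that z(L) ⊆ L, the restriction of P to L is injective with P(L) = W, and P(z(v)) = x(P(v)) for every v ∈ L (i.e. P ∘ z ∘ (P|_L)^{-1} = x as an endomorphism of W). -/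
open scoped BigOperators

/-- The coordinate shift: `(shiftMap v) i = v (i+1)`, with the last coordinate sent to `0`. -/
def shiftMap (k : Type*) [Field k] (N : ℕ) : (Fin N → k) →ₗ[k] (Fin N → k) where
  toFun v i := if h : (i : ℕ) + 1 < N then v ⟨(i : ℕ) + 1, h⟩ else 0
  map_add' u v := by funext i; split <;> rename_i h <;> simp [h]
  map_smul' c v := by funext i; split <;> rename_i h <;> simp [h]

/-- The ambient `2(m+2n)`-dimensional space `V`: the first factor holds the coordinates in the
basis `e₁, …, e_{m+2n}`, the second factor those in `f₁, …, f_{m+2n}` (0-indexed). -/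
abbrev VV (k : Type*) [Field k] (m n : ℕ) := (Fin (m + 2*n) → k) × (Fin (m + 2*n) → k)

/-- The nilpotent `z : V → V`, `z eᵢ = eᵢ₋₁`, `z fᵢ = fᵢ₋₁` (with `e₀ = f₀ = 0`). -/
def zmap (k : Type*) [Field k] (m n : ℕ) : VV k m n →ₗ[k] VV k m n :=
  (shiftMap k (m + 2*n)).prodMap (shiftMap k (m + 2*n))

/-- The space `W = span(e₁, …, e_{m+n}, f₁, …, f_n)`, with coordinates indexed by
`Fin (m+2n)`: index `u < m+n` corresponds to `e_{u+1}`, index `u ≥ m+n` to `f_{u-(m+n)+1}`. -/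
abbrev Wt (k : Type*) [Field k] (m n : ℕ) := Fin (m + 2*n) → k

/-- The projection `P : V → W` with `P eᵢ = eᵢ` for `i ≤ m+n`, `P eᵢ = 0` otherwise,
`P fⱼ = fⱼ` for `j ≤ n`, `P fⱼ = 0` otherwise. -/
def Pmap (k : Type*) [Field k] (m n : ℕ) : VV k m n →ₗ[k] Wt k m n where
  toFun v i :=
    if (i : ℕ) < m + n then v.1 i else v.2 ⟨(i : ℕ) - (m + n), by have := i.isLt; omega⟩
  map_add' u v := by funext i; split <;> rename_i h <;> simp [h]
  map_smul' c v := by funext i; split <;> rename_i h <;> simp [h]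

/-- Membership in the slice `S′_{m,n}`: viewing `x` as a matrix in the ordered basis
`e₁, …, e_{m+n}, f₁, …, f_n` of `W`, there are scalars `a, c` (indexed by the `e`-columns)
and `b, d` (indexed by the `f`-columns) with
`x eᵢ = eᵢ₋₁ + aᵢ e_{m+n} + cᵢ f_n` (for `1 ≤ i ≤ m+n`) and
`x fⱼ = fⱼ₋₁ + bⱼ e_{m+n} + dⱼ f_n` (for `1 ≤ j ≤ n`), with `e₀ = f₀ = 0`. -/
def MemS' {k : Type*} [Field k] {m n : ℕ} (hn : 1 ≤ n)
    (x : Matrix (Fin (m + 2*n)) (Fin (m + 2*n)) k) : Prop :=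
  ∃ (a c : Fin (m + n) → k) (b d : Fin n → k),
    ∀ v : Fin (m + 2*n),
      x.mulVec (Pi.single v 1) =
        (if 1 ≤ (v : ℕ) ∧ (v : ℕ) ≠ m + n then
          (Pi.single (⟨(v : ℕ) - 1, by have := v.isLt; omega⟩ : Fin (m + 2*n)) 1 : Wt k m n)
         else 0)
        + (if h : (v : ℕ) < m + n then a ⟨(v : ℕ), h⟩
            else b ⟨(v : ℕ) - (m + n), by have := v.isLt; omega⟩) •
            (Pi.single (⟨m + n - 1, by omega⟩ : Fin (m + 2*n)) 1 : Wt k m n)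
        + (if h : (v : ℕ) < m + n then c ⟨(v : ℕ), h⟩
            else d ⟨(v : ℕ) - (m + n), by have := v.isLt; omega⟩) •
            (Pi.single (⟨m + 2*n - 1, by omega⟩ : Fin (m + 2*n)) 1 : Wt k m n)

/-!
A vector of `V` is recovered from the `e₁`- and `f₁`-coordinates of its orbit under `z`. If `L` is
`z`-stable and `P ∘ z = x ∘ P` on `L`, then for `v ∈ L` these are the `e₁`- and `f₁`-coordinates of
the orbit of `P v` under `x`, so `v` is determined by `P v` and `L` by `x`. Conversely, the
`e₁`- and `f₁`-coordinates along the `x`-orbit of `w ∈ W` define a lift `W → V`, whose range is `L`.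
It is a section of `P` because `x ∈ S′_{m,n}` acts as the shift on all coordinates except those of
`e_{m+n}` and `f_n`, and it intertwines `x` with `z` because `x ^ (m + 2n) = 0`.
-/

section Observability

variable {R M M' : Type*} [Semiring R] [AddCommMonoid M] [Module R M]
  [AddCommMonoid M'] [Module R M']

/-- The observability map of the discrete linear system with dynamics `f` and output functional
`φ`: it sends an initial state to its first `N` outputs `φ w, φ (f w), …, φ (f ^ (N - 1) w)`. -/
def observabilityMap (φ : M →ₗ[R] R) (f : Module.End R M) (N : ℕ) : M →ₗ[R] (Fin N → R) :=
  LinearMap.pi fun i => φ ∘ₗ f ^ (i : ℕ)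

@[simp]
theorem observabilityMap_apply (φ : M →ₗ[R] R) (f : Module.End R M) (N : ℕ) (w : M) (i : Fin N) :
    observabilityMap φ f N w i = φ ((f ^ (i : ℕ)) w) :=
  rfl

theorem observabilityMap_comp (φ : M' →ₗ[R] R) {f : Module.End R M} {f' : Module.End R M'}
    {g : M →ₗ[R] M'} (h : f' ∘ₗ g = g ∘ₗ f) (N : ℕ) :
    observabilityMap φ f' N ∘ₗ g = observabilityMap (φ ∘ₗ g) f N := by
  ext w i
  exact congrArg φ (LinearMap.congr_fun (Module.End.commute_pow_left_of_commute h i) w)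

theorem pow_apply_of_apply_eq_succ {N : ℕ} {f : Module.End R (Fin N → R)} {s : ℕ} (t : ℕ)
    (hst : s + t < N)
    (hf : ∀ w u (_ : s ≤ u) (hu : u < s + t), f w ⟨u, by omega⟩ = w ⟨u + 1, by omega⟩)
    (w : Fin N → R) : (f ^ t) w ⟨s, by omega⟩ = w ⟨s + t, hst⟩ := by
  induction t generalizing w with
  | zero => rfl
  | succ t ih =>
    rw [pow_succ, Module.End.mul_apply, ih (by omega) fun w u hsu hu => hf w u hsu (by omega)]
    exact hf w (s + t) (by omega) (by omega)

end Observability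

theorem pow_finrank_eq_zero_of_isNilpotent {R M : Type*} [CommRing R] [IsDomain R]
    [AddCommGroup M] [Module R M] [Module.Finite R M] [Module.Free R M] {f : Module.End R M}
    (hf : IsNilpotent f) : f ^ Module.finrank R M = 0 := by
  simpa only [IsNilpotent.charpoly_eq_X_pow_finrank hf, map_pow, Polynomial.aeval_X]
    using f.aeval_self_charpoly

theorem eq_range_of_map_eq_top_of_leftInvOn {R M M' : Type*} [Semiring R] [AddCommMonoid M]
    [Module R M] [AddCommMonoid M'] [Module R M'] {g : M →ₗ[R] M'} {s : M' →ₗ[R] M}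
    {p : Submodule R M} (hp : p.map g = ⊤) (hs : Set.LeftInvOn s g p) :
    p = LinearMap.range s := by
  refine le_antisymm (fun v hv => ⟨g v, hs hv⟩) ?_
  rintro _ ⟨w, rfl⟩
  obtain ⟨v, hv, rfl⟩ := hp.ge (Submodule.mem_top : w ∈ ⊤)
  rwa [hs hv]

section Shift

variable {k : Type*} [Field k] {N : ℕ}

theorem shiftMap_apply_of_lt (u : Fin N → k) {i : ℕ} (hi : i + 1 < N) :
    shiftMap k N u ⟨i, by omega⟩ = u ⟨i + 1, hi⟩ :=
  dif_pos hi

theorem shiftMap_comp_observabilityMap {M : Type*} [AddCommMonoid M] [Module k M]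
    (φ : M →ₗ[k] k) {f : Module.End k M} (hf : f ^ N = 0) :
    shiftMap k N ∘ₗ observabilityMap φ f N = observabilityMap φ f N ∘ₗ f := by
  ext w i
  have hsucc : (f ^ (i : ℕ)) (f w) = (f ^ (i + 1 : ℕ)) w := by
    rw [pow_succ, Module.End.mul_apply]
  simp only [LinearMap.comp_apply, observabilityMap_apply, hsucc]
  by_cases hi : (i : ℕ) + 1 < N
  · exact shiftMap_apply_of_lt _ hi
  · rw [show (i : ℕ) + 1 = N by omega, hf, LinearMap.zero_apply, map_zero]
    exact dif_neg hi

theorem observabilityMap_proj_shiftMap (hN : 0 < N) :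
    observabilityMap (LinearMap.proj ⟨0, hN⟩) (shiftMap k N) N = LinearMap.id := by
  refine LinearMap.ext fun u => funext fun i => ?_
  simpa using pow_apply_of_apply_eq_succ (f := shiftMap k N) (s := 0) i (by omega)
    (fun w _ _ _ => shiftMap_apply_of_lt w _) u

theorem observabilityMap_proj_comp {M : Type*} [AddCommMonoid M] [Module k M] (hN : 0 < N)
    {f : Module.End k M} {π : M →ₗ[k] (Fin N → k)} (hπ : shiftMap k N ∘ₗ π = π ∘ₗ f) :
    observabilityMap (LinearMap.proj ⟨0, hN⟩ ∘ₗ π) f N = π := by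
  rw [← observabilityMap_comp _ hπ, observabilityMap_proj_shiftMap, LinearMap.id_comp]

theorem observabilityMap_apply_of_mem {M M' : Type*} [AddCommMonoid M] [Module k M]
    [AddCommMonoid M'] [Module k M'] (hN : 0 < N) {f : Module.End k M} {f' : Module.End k M'}
    {g : M →ₗ[k] M'} {φ : M' →ₗ[k] k} {π : M →ₗ[k] (Fin N → k)}
    (hφ : φ ∘ₗ g = LinearMap.proj ⟨0, hN⟩ ∘ₗ π) (hπ : shiftMap k N ∘ₗ π = π ∘ₗ f)
    {p : Submodule k M} (hf : ∀ v ∈ p, f v ∈ p) (hg : ∀ v ∈ p, g (f v) = f' (g v))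
    {v : M} (hv : v ∈ p) : observabilityMap φ f' N (g v) = π v := by
  have hg' : f' ∘ₗ (g ∘ₗ p.subtype) = (g ∘ₗ p.subtype) ∘ₗ f.restrict hf :=
    LinearMap.ext fun u => (hg u u.2).symm
  have hπ' : shiftMap k N ∘ₗ (π ∘ₗ p.subtype) = (π ∘ₗ p.subtype) ∘ₗ f.restrict hf :=
    LinearMap.ext fun u => LinearMap.congr_fun hπ u
  have hobs : observabilityMap φ f' N ∘ₗ (g ∘ₗ p.subtype) = π ∘ₗ p.subtype := by
    rw [observabilityMap_comp φ hg', ← LinearMap.comp_assoc, hφ, LinearMap.comp_assoc,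
      observabilityMap_proj_comp hN hπ']
  exact LinearMap.congr_fun hobs ⟨v, hv⟩

end Shift

section Lift

variable {k : Type*} [Field k] {m n : ℕ}

theorem MemS'.mulVec_apply_of_succ_ne {hn : 1 ≤ n}
    {x : Matrix (Fin (m + 2 * n)) (Fin (m + 2 * n)) k} (hx : MemS' hn x) {u : ℕ}
    (hu : u + 1 < m + 2 * n) (hu' : u + 1 ≠ m + n) (w : Wt k m n) :
    x.mulVec w ⟨u, by omega⟩ = w ⟨u + 1, hu⟩ := by
  obtain ⟨a, c, b, d, hcol⟩ := hx
  have hrow : x ⟨u, by omega⟩ = Pi.single ⟨u + 1, hu⟩ 1 := by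
    funext v
    have hv := congrFun (hcol v) ⟨u, by omega⟩
    have he : u ≠ m + n - 1 := by omega
    have hf : u ≠ m + 2 * n - 1 := by omega
    simp only [Matrix.mulVec_single_one, Matrix.col_apply, Pi.add_apply, Pi.smul_apply, ite_apply,
      Pi.zero_apply, Pi.single_apply, Fin.ext_iff, he, hf, if_false, smul_zero, add_zero] at hv
    simp only [hv, Pi.single_apply, Fin.ext_iff]
    split_ifs <;> first | rfl | omega
  rw [Matrix.mulVec, hrow, single_one_dotProduct]

theorem MemS'.pow_apply_of_lt_or_le {hn : 1 ≤ n}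
    {x : Matrix (Fin (m + 2 * n)) (Fin (m + 2 * n)) k} (hx : MemS' hn x) {s t : ℕ}
    (hst : s + t < m + 2 * n) (hs : s + t < m + n ∨ m + n ≤ s) (w : Wt k m n) :
    (Matrix.toLin' x ^ t) w ⟨s, by omega⟩ = w ⟨s + t, hst⟩ :=
  pow_apply_of_apply_eq_succ t hst
    (fun w _ _ _ => hx.mulVec_apply_of_succ_ne (by omega) (by omega) w) w

theorem proj_zero_comp_Pmap (hn : 1 ≤ n) :
    LinearMap.proj ⟨0, by omega⟩ ∘ₗ Pmap k m n =
      LinearMap.proj ⟨0, by omega⟩ ∘ₗ LinearMap.fst k _ _ :=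
  LinearMap.ext fun _ => if_pos (show 0 < m + n by omega)

theorem proj_add_comp_Pmap (hn : 1 ≤ n) :
    LinearMap.proj ⟨m + n, by omega⟩ ∘ₗ Pmap k m n =
      LinearMap.proj ⟨0, by omega⟩ ∘ₗ LinearMap.snd k _ _ := by
  refine LinearMap.ext fun v => ?_
  simp [Pmap]

/-- The lift `W → V` whose `eᵢ₊₁`- and `fᵢ₊₁`-coordinates at `w` are the `e₁`- and
`f₁`-coordinates (indices `0` and `m + n` of `Wt`) of `xⁱ w`. Its range is the subspace `L` of the
theorem. -/
def stableLift (hn : 1 ≤ n) (x : Module.End k (Wt k m n)) : Wt k m n →ₗ[k] VV k m n :=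
  (observabilityMap (LinearMap.proj ⟨0, by omega⟩) x _).prod
    (observabilityMap (LinearMap.proj ⟨m + n, by omega⟩) x _)

theorem Pmap_stableLift {hn : 1 ≤ n} {x : Matrix (Fin (m + 2 * n)) (Fin (m + 2 * n)) k}
    (hx : MemS' hn x) (w : Wt k m n) :
    Pmap k m n (stableLift hn (Matrix.toLin' x) w) = w := by
  funext i
  by_cases hi : (i : ℕ) < m + n
  · calc
      Pmap k m n (stableLift hn (Matrix.toLin' x) w) i
        = (Matrix.toLin' x ^ (i : ℕ)) w ⟨0, by omega⟩ := if_pos hi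
      _ = w ⟨0 + i, by omega⟩ := hx.pow_apply_of_lt_or_le (by omega) (by omega) w
      _ = w i := by simp only [zero_add]
  · have hadd : m + n + (i - (m + n)) = (i : ℕ) := by omega
    calc
      Pmap k m n (stableLift hn (Matrix.toLin' x) w) i
        = (Matrix.toLin' x ^ (i - (m + n) : ℕ)) w ⟨m + n, by omega⟩ := if_neg hi
      _ = w ⟨m + n + (i - (m + n)), by omega⟩ :=
        hx.pow_apply_of_lt_or_le (by omega) (by omega) w
      _ = w i := by simp only [hadd]

theorem zmap_stableLift (hn : 1 ≤ n) {x : Module.End k (Wt k m n)} (hx : IsNilpotent x)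
    (w : Wt k m n) : zmap k m n (stableLift hn x w) = stableLift hn x (x w) := by
  have hpow : x ^ (m + 2 * n) = 0 := by simpa using pow_finrank_eq_zero_of_isNilpotent hx
  have hshift (φ : Wt k m n →ₗ[k] k) :
      shiftMap k _ (observabilityMap φ x _ w) = observabilityMap φ x _ (x w) :=
    LinearMap.congr_fun (shiftMap_comp_observabilityMap φ hpow) w
  exact Prod.ext (hshift (LinearMap.proj _)) (hshift (LinearMap.proj _))

theorem stableLift_leftInvOn_Pmap (hn : 1 ≤ n) {x : Module.End k (Wt k m n)}
    {L : Submodule k (VV k m n)} (hz : ∀ v ∈ L, zmap k m n v ∈ L)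
    (hPz : ∀ v ∈ L, Pmap k m n (zmap k m n v) = x (Pmap k m n v)) :
    Set.LeftInvOn (stableLift hn x) (Pmap k m n) L := fun _ hv =>
  have hN : 0 < m + 2 * n := by omega
  Prod.ext (observabilityMap_apply_of_mem hN (proj_zero_comp_Pmap hn) rfl hz hPz hv)
    (observabilityMap_apply_of_mem hN (proj_add_comp_Pmap hn) rfl hz hPz hv)

end Lift

/-- **Existence and uniqueness of the `z`-stable lift `L` of `W` realizing a given nilpotent
`x ∈ S′_{m,n}`** (Lemma `lin` of Nandakumar–Yang): for `x ∈ S′_{m,n}` nilpotent there is a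
unique `(m+2n)`-dimensional subspace `L ⊆ V` with `z(L) ⊆ L`, `P|_L` injective with
`P(L) = W`, and `P ∘ z = x ∘ P` on `L`. -/
theorem unique_z_stable_lift {k : Type*} [Field k] (m n : ℕ) (hn : 1 ≤ n)
    (x : Matrix (Fin (m + 2*n)) (Fin (m + 2*n)) k)
    (hx : MemS' hn x) (hnil : IsNilpotent x) :
    ∃! L : Submodule k (VV k m n),
      Module.finrank k L = m + 2*n ∧
      (∀ v ∈ L, zmap k m n v ∈ L) ∧
      (∀ v ∈ L, Pmap k m n v = 0 → v = 0) ∧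
      Submodule.map (Pmap k m n) L = ⊤ ∧
      ∀ v ∈ L, Pmap k m n (zmap k m n v) = x.mulVec (Pmap k m n v) := by
  have hP := Pmap_stableLift hx
  have hz := zmap_stableLift hn (Matrix.isNilpotent_toLin'_iff x |>.mpr hnil)
  refine ⟨LinearMap.range (stableLift hn (Matrix.toLin' x)), ⟨?_, ?_, ?_, ?_, ?_⟩, ?_⟩
  · rw [LinearMap.finrank_range_of_inj (Function.LeftInverse.injective hP),
      Module.finrank_fin_fun]
  · rintro _ ⟨w, rfl⟩
    exact ⟨_, (hz w).symm⟩
  · rintro _ ⟨w, rfl⟩ hw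
    rw [(hP w).symm.trans hw, map_zero]
  · rw [← LinearMap.range_comp, LinearMap.range_eq_top]
    exact Function.LeftInverse.surjective hP
  · rintro _ ⟨w, rfl⟩
    rw [hz, hP, hP, Matrix.toLin'_apply]
  · rintro L ⟨-, hzL, -, hPL, hPz⟩
    exact eq_range_of_map_eq_top_of_leftInvOn hPL (stableLift_leftInvOn_Pmap hn hzL hPz)
end

section
/- Let x ∈ S′_{m,n} satisfy x^{m+2n} = 0, regarded as an (m+2n)×(m+2n) matrix via the ordered basis e_1, …, e_{m+n}, f_1, …, f_n of W. Then for every 1 ≤ p ≤ m+2n one has (x^{n+1})_{m+n, p} = 0 and (x^{m+n+1})_{m+2n, p} = 0. -/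
open scoped BigOperators

/-!
If row `i` of `y` is the standard basis vector at `j`, then left multiplication by `y` copies row
`j` of the other factor into row `i`. For `x ∈ S′_{m,n}`, every row other than those of `e_{m+n}`
and `f_n` is the standard basis vector at the next index, so walking along the `e`-block shows that
row `e₁` of `x^{m+n-1}` is the basis vector at `e_{m+n}`, and walking along the `f`-block shows that
row `f₁` of `x^{n-1}` is the basis vector at `f_n`. Hence row `e_{m+n}` of `x^{n+1}` and row `f_n`
of `x^{m+n+1}` are both rows of `x^{m+2n} = 0`.
-/

theorem row_mul_of_row_eq_single {l m n R : Type*} [Fintype m] [DecidableEq m]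
    [NonAssocSemiring R] {y : Matrix l m R} {i : l} {j : m} (h : y.row i = Pi.single j 1)
    (z : Matrix m n R) : (y * z).row i = z.row j :=
  calc (y * z).row i = Matrix.vecMul (y.row i) z := Matrix.mul_apply_eq_vecMul y z i
    _ = z.row j := by rw [h, Matrix.single_one_vecMul]

theorem row_pow_eq_single_of_chain {ι R : Type*} [Fintype ι] [DecidableEq ι] [Semiring R]
    {x : Matrix ι ι R} {r : ℕ} (u : Fin (r + 1) → ι)
    (hu : ∀ t : Fin r, x.row (u t.castSucc) = Pi.single (u t.succ) 1) :
    (x ^ r).row (u 0) = Pi.single (u (Fin.last r)) 1 := by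
  induction r with
  | zero =>
    ext j
    rw [pow_zero]
    exact Matrix.one_eq_pi_single
  | succ r ih =>
    have init : (x ^ r).row (u 0) = Pi.single (u (Fin.last r).castSucc) 1 :=
      ih (u ∘ Fin.castSucc) fun t => hu t.castSucc
    rw [pow_succ, row_mul_of_row_eq_single init, hu, Fin.succ_last]

namespace MemS'

variable {k : Type*} [Field k] {m n : ℕ} {hn : 1 ≤ n}
  {x : Matrix (Fin (m + 2 * n)) (Fin (m + 2 * n)) k}

theorem row_eq_single (hx : MemS' hn x) {u v : Fin (m + 2 * n)} (huv : (u : ℕ) + 1 = v)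
    (hv : (v : ℕ) ≠ m + n) : x.row u = Pi.single v 1 := by
  obtain ⟨a, c, b, d, hcol⟩ := hx
  have hue : u ≠ ⟨m + n - 1, by omega⟩ := by grind
  have huf : u ≠ ⟨m + 2 * n - 1, by omega⟩ := by grind
  ext w
  have hentry := congrFun (hcol w) u
  simp only [Matrix.mulVec_single_one, Matrix.col_apply, Pi.add_apply, Pi.smul_apply,
    Pi.single_eq_of_ne hue, Pi.single_eq_of_ne huf, smul_zero, add_zero] at hentry
  rw [Matrix.row_apply, hentry]
  split_ifs with hw <;> simp only [Pi.single_apply, Pi.zero_apply, Fin.ext_iff] <;> grind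

theorem row_pow_e_block_eq_single (hx : MemS' hn x) :
    (x ^ (m + n - 1)).row ⟨0, by omega⟩ = Pi.single ⟨m + n - 1, by omega⟩ 1 := by
  refine row_pow_eq_single_of_chain (fun t : Fin (m + n - 1 + 1) => ⟨t, by omega⟩) fun t =>
    hx.row_eq_single rfl ?_
  simp only [Fin.val_succ]
  omega

theorem row_pow_f_block_eq_single (hx : MemS' hn x) :
    (x ^ (n - 1)).row ⟨m + n, by omega⟩ = Pi.single ⟨m + 2 * n - 1, by omega⟩ 1 := by
  have hlast : m + 2 * n - 1 = m + n + (n - 1) := by omega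
  simp only [hlast]
  refine row_pow_eq_single_of_chain (fun t : Fin (n - 1 + 1) => ⟨m + n + t, by omega⟩) fun t =>
    hx.row_eq_single rfl ?_
  simp only [Fin.val_succ]
  omega

end MemS'

/-- **Vanishing of the relevant rows of powers of a nilpotent `x ∈ S′_{m,n}`**: if
`x^{m+2n} = 0` then, in 1-indexed notation, `(x^{n+1})_{m+n,p} = 0` and
`(x^{m+n+1})_{m+2n,p} = 0` for all `1 ≤ p ≤ m+2n`. -/
theorem rows_of_powers_vanish {k : Type*} [Field k] (m n : ℕ) (hn : 1 ≤ n)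
    (x : Matrix (Fin (m + 2*n)) (Fin (m + 2*n)) k)
    (hx : MemS' hn x) (hnil : x ^ (m + 2*n) = 0) :
    ∀ p : Fin (m + 2*n),
      (x ^ (n + 1)) ⟨m + n - 1, by omega⟩ p = 0 ∧
      (x ^ (m + n + 1)) ⟨m + 2*n - 1, by omega⟩ p = 0 := by
  have row_e : (x ^ (n + 1)).row ⟨m + n - 1, by omega⟩ = 0 := by
    rw [← row_mul_of_row_eq_single hx.row_pow_e_block_eq_single, ← pow_add,
      show m + n - 1 + (n + 1) = m + 2 * n by omega, hnil]
    rfl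
  have row_f : (x ^ (m + n + 1)).row ⟨m + 2 * n - 1, by omega⟩ = 0 := by
    rw [← row_mul_of_row_eq_single hx.row_pow_f_block_eq_single, ← pow_add,
      show n - 1 + (m + n + 1) = m + 2 * n by omega, hnil]
    rfl
  exact fun p => ⟨congrFun row_e p, congrFun row_f p⟩
end

section
/- If L ⊆ V is a subspace with dim L = m+2n, z(L) ⊆ L, and P(L) = W, then the restriction of P to L is a linear isomorphism onto W, and the endomorphism x := P ∘ z ∘ (P|_L)^{-1} of W lies in S′_{m,n} and is nilpotent. -/
open scoped BigOperators

/-!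
Surjectivity of `P|_L` and the equality of dimensions make `P|_L : L → W` an isomorphism. It carries
`z|_L` to `x`, so `x` is nilpotent because `z` is. Membership in the slice says that every row of
`x` other than those of `e_{m+n}` and `f_n` is that of the two shifts on `W`, and in these rows
`P ∘ z` reads the next coordinate of `P`.
-/

theorem bijective_domRestrict_of_map_eq_top {K V W : Type*} [DivisionRing K]
    [AddCommGroup V] [Module K V] [AddCommGroup W] [Module K W]
    {L : Submodule K V} [FiniteDimensional K L] {P : V →ₗ[K] W}
    (hdim : Module.finrank K L = Module.finrank K W) (hP : L.map P = ⊤) :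
    Function.Bijective (P.domRestrict L) := by
  have hsurj : Function.Surjective (P.domRestrict L) := by
    rw [← LinearMap.range_eq_top, LinearMap.range_domRestrict, hP]
  have : FiniteDimensional K W := Module.Finite.of_surjective _ hsurj
  exact ⟨(LinearMap.injective_iff_surjective_of_finrank_eq_finrank hdim).2 hsurj, hsurj⟩

section CompressedEnd

variable {R V W : Type*} [Semiring R] [AddCommMonoid V] [Module R V] [AddCommMonoid W] [Module R W]
  {L : Submodule R V} {P : V →ₗ[R] W} {z : Module.End R V}

/-- The endomorphism `P ∘ z ∘ (P|_L)⁻¹` of `W`, for a `z`-stable submodule `L` of `V` that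
`P : V → W` maps bijectively onto `W`; it is `z|_L` transported to `W` along `P|_L`. -/
noncomputable def compressedEnd (hP : Function.Bijective (P.domRestrict L))
    (hz : ∀ v ∈ L, z v ∈ L) : Module.End R W :=
  (LinearEquiv.ofBijective (P.domRestrict L) hP).conjRingEquiv (z.restrict hz)

theorem compressedEnd_apply (hP : Function.Bijective (P.domRestrict L))
    (hz : ∀ v ∈ L, z v ∈ L) {v : V} (hv : v ∈ L) :
    compressedEnd hP hz (P v) = P (z v) := by
  have hsymm : (LinearEquiv.ofBijective (P.domRestrict L) hP).symm (P v) = ⟨v, hv⟩ :=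
    (LinearEquiv.symm_apply_eq _).2 rfl
  simp [compressedEnd, hsymm]

theorem isNilpotent_compressedEnd (hP : Function.Bijective (P.domRestrict L))
    (hz : ∀ v ∈ L, z v ∈ L) (hnil : IsNilpotent z) : IsNilpotent (compressedEnd hP hz) :=
  (Module.End.isNilpotent.restrict hz hnil).map _

end CompressedEnd

section Shift

variable (k : Type*) [Field k]

theorem shiftMap_pow_apply (N j : ℕ) (v : Fin N → k) (i : Fin N) :
    (shiftMap k N ^ j) v i = if h : (i : ℕ) + j < N then v ⟨i + j, h⟩ else 0 := by
  induction j generalizing v with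
  | zero => simp
  | succ j ih =>
    rw [pow_succ, Module.End.mul_apply, ih]
    simp only [shiftMap, LinearMap.coe_mk, AddHom.coe_mk]
    grind

theorem isNilpotent_shiftMap (N : ℕ) : IsNilpotent (shiftMap k N) :=
  ⟨N, by ext; simp [shiftMap_pow_apply]⟩

theorem isNilpotent_zmap (m n : ℕ) : IsNilpotent (zmap k m n) := by
  obtain ⟨N, hN⟩ := isNilpotent_shiftMap k (m + 2 * n)
  have hpair : IsNilpotent (shiftMap k (m + 2 * n), shiftMap k (m + 2 * n)) :=
    ⟨N, Prod.ext hN hN⟩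
  exact hpair.map (LinearMap.prodMapRingHom k _ _)

end Shift

section Slice

variable {k : Type*} [Field k] {m n : ℕ}

theorem Pmap_zmap_apply (v : VV k m n) {i : Fin (m + 2 * n)} (hi : (i : ℕ) + 1 < m + 2 * n)
    (he : (i : ℕ) + 1 ≠ m + n) : Pmap k m n (zmap k m n v) i = Pmap k m n v ⟨i + 1, hi⟩ := by
  simp only [Pmap, zmap, shiftMap, LinearMap.coe_mk, AddHom.coe_mk, LinearMap.prodMap_apply]
  grind

theorem ite_single_pred_apply (i j : Fin (m + 2 * n)) :
    (if 1 ≤ (j : ℕ) ∧ (j : ℕ) ≠ m + n then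
      (Pi.single (⟨j - 1, by omega⟩ : Fin (m + 2 * n)) 1 : Wt k m n) else 0) i =
      if (i : ℕ) + 1 = j ∧ (i : ℕ) + 1 ≠ m + n then 1 else 0 := by
  rw [ite_apply, Pi.zero_apply]
  grind

theorem memS'_iff_apply_eq (hn : 1 ≤ n) (x : Matrix (Fin (m + 2 * n)) (Fin (m + 2 * n)) k) :
    MemS' hn x ↔ ∀ i j : Fin (m + 2 * n), (i : ℕ) + 1 ≠ m + n → (i : ℕ) + 1 < m + 2 * n →
      x i j = if (i : ℕ) + 1 = j then 1 else 0 := by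
  constructor
  · rintro ⟨a, c, b, d, hx⟩ i j he hf
    have hij := congrFun (hx j) i
    rw [Matrix.mulVec_single_one, Matrix.col_apply, Pi.add_apply, Pi.add_apply,
      ite_single_pred_apply] at hij
    have he' : (i : ℕ) ≠ m + n - 1 := by omega
    have hf' : (i : ℕ) ≠ m + 2 * n - 1 := by omega
    simpa [Pi.single_apply, Fin.ext_iff, he, he', hf'] using hij
  · intro hx
    -- The free scalars are the entries of `x` in the rows of `e_{m+n}` and `f_n`.
    refine ⟨fun j ↦ x ⟨m + n - 1, by omega⟩ ⟨j, by omega⟩,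
      fun j ↦ x ⟨m + 2 * n - 1, by omega⟩ ⟨j, by omega⟩,
      fun j ↦ x ⟨m + n - 1, by omega⟩ ⟨m + n + j, by omega⟩,
      fun j ↦ x ⟨m + 2 * n - 1, by omega⟩ ⟨m + n + j, by omega⟩, fun j ↦ funext fun i ↦ ?_⟩
    have hcol (r : Fin (m + 2 * n)) : (if _ : (j : ℕ) < m + n then x r ⟨j, j.isLt⟩
        else x r ⟨m + n + (j - (m + n)), by omega⟩) = x r j := by grind
    rw [Matrix.mulVec_single_one, Matrix.col_apply, Pi.add_apply, Pi.add_apply,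
      ite_single_pred_apply]
    simp only [hcol, Pi.smul_apply, smul_eq_mul, Pi.single_apply, Fin.ext_iff]
    by_cases he : (i : ℕ) + 1 = m + n
    · have hi : i = ⟨m + n - 1, by omega⟩ := by grind
      grind
    by_cases hf : (i : ℕ) + 1 = m + 2 * n
    · have hi : i = ⟨m + 2 * n - 1, by omega⟩ := by grind
      grind
    · rw [hx i j he (by omega)]
      grind

end Slice

/-- **From a `z`-stable lift of `W` to a nilpotent element of the slice `S′_{m,n}`**: if
`L ⊆ V` has dimension `m+2n`, is `z`-stable, and `P(L) = W`, then `P|_L` is an isomorphism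
onto `W`, and the endomorphism `x = P ∘ z ∘ (P|_L)⁻¹` of `W` (characterized by
`P(z v) = x(P v)` for `v ∈ L`) lies in `S′_{m,n}` and is nilpotent. -/
theorem lift_gives_slice_element {k : Type*} [Field k] (m n : ℕ) (hn : 1 ≤ n)
    (L : Submodule k (VV k m n))
    (hdim : Module.finrank k L = m + 2*n)
    (hz : ∀ v ∈ L, zmap k m n v ∈ L)
    (hP : Submodule.map (Pmap k m n) L = ⊤) :
    (∀ v ∈ L, Pmap k m n v = 0 → v = 0) ∧
    ∃ x : Matrix (Fin (m + 2*n)) (Fin (m + 2*n)) k,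
      (∀ v ∈ L, Pmap k m n (zmap k m n v) = x.mulVec (Pmap k m n v)) ∧
      MemS' hn x ∧ IsNilpotent x := by
  have hbij : Function.Bijective ((Pmap k m n).domRestrict L) :=
    bijective_domRestrict_of_map_eq_top (by simpa using hdim) hP
  let X := compressedEnd hbij hz
  have hX (v : VV k m n) (hv : v ∈ L) : X (Pmap k m n v) = Pmap k m n (zmap k m n v) :=
    compressedEnd_apply hbij hz hv
  refine ⟨LinearMap.disjoint_ker.1 (LinearMap.injective_domRestrict_iff.1 hbij.1),
    LinearMap.toMatrix' X, fun v hv ↦ ?_, ?_, ?_⟩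
  · rw [LinearMap.toMatrix'_mulVec, hX v hv]
  · refine (memS'_iff_apply_eq hn _).2 fun i j he hi ↦ ?_
    obtain ⟨⟨v, hv⟩, hvj⟩ := hbij.2 (Pi.single j 1)
    rw [LinearMap.domRestrict_apply] at hvj
    rw [LinearMap.toMatrix'_apply, ← hvj, hX v hv, Pmap_zmap_apply v hi he, hvj]
    simp [Pi.single_apply, Fin.ext_iff]
  · exact (isNilpotent_compressedEnd hbij hz (isNilpotent_zmap k m n)).map
      LinearMap.toMatrixAlgEquiv'
end
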